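/- arXiv:math/0204087 — 2 statements merged into one kernel-verified Lean document; each statement's English description precedes it below -/
import Mathlib

section
/- Let λ > 2 and let (P̃_{λ,n})_{n≥0} be the monic polynomials defined by P̃_{λ,0}(s) = 1, P̃_{λ,−1} := 0, and s P̃_{λ,n}(s) = P̃_{λ,n+1}(s) + λ(n+1) P̃_{λ,n}(s) + n(n+1) P̃_{λ,n−1}(s). Then for all n, m ≥ 0: (λ² − 4) Σ_{k=1}^∞ k p_λ^k P̃_{λ,n}(q k) P̃_{λ,m}(q k) = 0 if n ≠ m, and equals n! · (n+1)! if n = m, where q := √(λ²−4) and p_λ := (λ−q)/(λ+q). -/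
open MeasureTheory

lemma mp_summable (p q : ℝ) (hp : |p| < 1) (f : Polynomial ℝ) :
    Summable (fun k : ℕ => (k : ℝ) * p ^ k * f.eval (q * k)) := by
  induction f using Polynomial.induction_on' with
  | add f g hf hg =>
    refine (hf.add hg).congr fun k => ?_
    simp only [Polynomial.eval_add]; ring
  | monomial n a =>
    have h := (summable_pow_mul_geometric_of_norm_lt_one (R := ℝ) (n + 1)
      (r := p) (by simpa using hp)).mul_left (a * q ^ n)
    refine h.congr fun k => ?_
    simp only [Polynomial.eval_monomial]; ring

lemma mp_shift (lam q u v : ℝ) (hl : lam = u + v) (hq : q = u - v) (huv : u * v = 1)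
    (P : ℕ → Polynomial ℝ) (h0 : P 0 = 1)
    (hrec : ∀ (n : ℕ) (s : ℝ), s * (P n).eval s =
      (P (n + 1)).eval s + lam * ((n : ℝ) + 1) * (P n).eval s +
        (n : ℝ) * ((n : ℝ) + 1) * (P (n - 1)).eval s) (x : ℝ) (n : ℕ) :
    (x + 1) * v * (P n).eval (q * (x + 1)) =
        (x - 1 - n) * u * (P n).eval (q * x) - (P (n + 1)).eval (q * x) ∧
    (x + 1) * v * (P (n + 1)).eval (q * (x + 1)) =
        (x - 1 - (n + 1)) * u * (P (n + 1)).eval (q * x) - (P (n + 2)).eval (q * x) := by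
  have e0 : ∀ s, (P 0).eval s = 1 := by intro s; simp [h0]
  have e1 : ∀ s, (P 1).eval s = s - lam := by
    intro s
    have := hrec 0 s
    simp [h0] at this
    linarith
  induction n with
  | zero =>
    have e2 : ∀ s, (P 2).eval s = (s - 2 * lam) * (s - lam) - 2 := by
      intro s
      have := hrec 1 s
      norm_num [h0, e1] at this
      linarith
    constructor
    · norm_num [e0, e1]
      subst hl hq; ring
    · norm_num [e0, e1, e2]
      subst hl hq
      linear_combination 2 * huv
  | succ n ih =>
    obtain ⟨i1, i2⟩ := ih
    refine ⟨by push_cast; exact i2, ?_⟩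
    have r1 := hrec (n + 1) (q * (x + 1))
    have r2 := hrec (n + 1) (q * x)
    have r3 := hrec (n + 2) (q * x)
    simp only [Nat.add_sub_cancel, show n + 2 - 1 = n + 1 from rfl, show n + 1 + 1 = n + 2 from rfl,
      show n + 2 + 1 = n + 3 from rfl] at r1 r2 r3
    push_cast at *
    show (x + 1) * v * (P (n + 2)).eval (q * (x + 1)) = (x - 1 - (n + 1 + 1)) * u *
      (P (n + 2)).eval (q * x) - (P (n + 3)).eval (q * x)
    generalize (P n).eval (q * (x + 1)) = a at *
    generalize (P (n + 1)).eval (q * (x + 1)) = b at *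
    generalize (P (n + 2)).eval (q * (x + 1)) = c at *
    generalize (P n).eval (q * x) = A at *
    generalize (P (n + 1)).eval (q * x) = B at *
    generalize (P (n + 2)).eval (q * x) = C at *
    generalize (P (n + 3)).eval (q * x) = D at *
    subst hl hq
    linear_combination (-(x + 1) * v) * r1 + ((u - v) * (x + 1) - (u + v) * (n + 2)) * i2
      - (n + 1) * (n + 2) * i1 + (x - 1 - n) * u * r2 - r3 + (2 * n + 4) * B * huv

theorem meixner_pascal_orthogonality
    (lam : ℝ) (hlam : 2 < lam) (q p : ℝ)
    (hq : q = Real.sqrt (lam ^ 2 - 4)) (hp : p = (lam - q) / (lam + q))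
    (P : ℕ → Polynomial ℝ) (h0 : P 0 = 1)
    (hrec : ∀ (n : ℕ) (s : ℝ), s * (P n).eval s =
      (P (n + 1)).eval s + lam * ((n : ℝ) + 1) * (P n).eval s +
        (n : ℝ) * ((n : ℝ) + 1) * (P (n - 1)).eval s) :
    (∀ n m : ℕ, n ≠ m →
      (lam ^ 2 - 4) * ∑' k : ℕ, (k : ℝ) * p ^ k * (P n).eval (q * k) * (P m).eval (q * k)
        = 0) ∧
    (∀ n : ℕ,
      (lam ^ 2 - 4) * ∑' k : ℕ, (k : ℝ) * p ^ k * ((P n).eval (q * k)) ^ 2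
        = (Nat.factorial n : ℝ) * (Nat.factorial (n + 1))) := by
  have hpos : 0 < lam ^ 2 - 4 := by nlinarith
  have hq2 : q ^ 2 = lam ^ 2 - 4 := by rw [hq, Real.sq_sqrt hpos.le]
  have hq0 : 0 < q := by rw [hq]; exact Real.sqrt_pos.2 hpos
  have hqlt : q < lam := by nlinarith
  have hp0 : 0 < p := by rw [hp]; apply div_pos <;> linarith
  have hp1 : p < 1 := by rw [hp, div_lt_one (by linarith)]; linarith
  have hpa : |p| < 1 := by rw [abs_of_pos hp0]; exact hp1
  obtain ⟨u, hu⟩ : ∃ u, u = (lam + q) / 2 := ⟨_, rfl⟩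
  obtain ⟨v, hv⟩ : ∃ v, v = (lam - q) / 2 := ⟨_, rfl⟩
  have huv : u * v = 1 := by rw [hu, hv]; linear_combination -hq2 / 4
  have hvp : v = p * u := by
    rw [hu, hv, hp]; field_simp
  have hsh := fun (n : ℕ) (x : ℝ) => (mp_shift lam q u v (by rw [hu, hv]; ring)
    (by rw [hu, hv]; ring) huv P h0 hrec x n).1
  have hsum := mp_summable p q hpa
  obtain ⟨S, hS⟩ : ∃ S : Polynomial ℝ → ℝ, ∀ f, S f =
    q ^ 2 * ∑' k : ℕ, (k : ℝ) * p ^ k * f.eval (q * k) := ⟨_, fun f => rfl⟩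
  have Sadd : ∀ f g, S (f + g) = S f + S g := by
    intro f g
    rw [hS, hS, hS, ← mul_add, ← (hsum f).tsum_add (hsum g)]
    congr 2; ext k; simp only [Polynomial.eval_add]; ring
  have Smul : ∀ (c : ℝ) f, S (Polynomial.C c * f) = c * S f := by
    intro c f
    rw [hS, hS, mul_left_comm, ← tsum_mul_left (a := c)]
    congr 1; apply tsum_congr; intro k; simp only [Polynomial.eval_mul, Polynomial.eval_C]; ring
  have S1 : S (P 0) = 1 := by
    rw [hS, h0]
    simp only [Polynomial.eval_one, mul_one]
    rw [tsum_coe_mul_geometric_of_norm_lt_one (by simpa using hpa)]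
    have : 1 - p = 2 * q / (lam + q) := by
      rw [hp]; field_simp [show lam + q ≠ 0 by linarith]; ring
    rw [this, hp]
    have : lam + q ≠ 0 := by linarith
    field_simp
    linear_combination -hq2
  have Sstep : ∀ n, S (P (n + 1)) = -(n * u) * S (P n) := by
    intro n
    have hq' : q ≠ 0 := hq0.ne'
    have hA : Summable (fun k : ℕ => (k : ℝ) * p ^ k * ((k - 1) * (P n).eval (q * k))) := by
      refine (hsum ((Polynomial.C q⁻¹ * Polynomial.X - 1) * P n)).congr fun k => ?_
      simp only [Polynomial.eval_mul, Polynomial.eval_sub, Polynomial.eval_C, Polynomial.eval_X,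
        Polynomial.eval_one]
      rw [inv_mul_cancel_left₀ hq']
    have hB : Summable (fun k : ℕ => ((k + 1 : ℕ) : ℝ) * p ^ (k + 1) *
        (((k + 1 : ℕ) - 1) * (P n).eval (q * (k + 1 : ℕ)))) :=
      (summable_nat_add_iff 1).2 hA
    have hAB := hA.tsum_eq_zero_add
    simp only [Nat.cast_zero, zero_mul, zero_add] at hAB
    have key : ∑' k : ℕ, (k : ℝ) * p ^ k * (P (n + 1)).eval (q * k) =
        u * ∑' k : ℕ, (k : ℝ) * p ^ k * ((k - 1) * (P n).eval (q * k)) -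
        (n * u) * ∑' k : ℕ, (k : ℝ) * p ^ k * (P n).eval (q * k) -
        u * ∑' k : ℕ, ((k + 1 : ℕ) : ℝ) * p ^ (k + 1) *
        (((k + 1 : ℕ) - 1) * (P n).eval (q * (k + 1 : ℕ))) := by
      rw [← tsum_mul_left, ← tsum_mul_left, ← tsum_mul_left,
        ← (hA.mul_left u).tsum_sub ((hsum (P n)).mul_left (n * u)),
        ← ((hA.mul_left u).sub ((hsum (P n)).mul_left (n * u))).tsum_sub (hB.mul_left u)]
      congr 1; ext k
      have := hsh n k
      rw [hvp] at this
      push_cast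
      linear_combination ((k : ℝ) * p ^ k) * this
    rw [hS, hS, key, ← hAB]; ring
  have Sz : ∀ n, S (P (n + 1)) = 0 := by
    intro n
    induction n with
    | zero => rw [Sstep]; simp
    | succ n ih => rw [Sstep, ih, mul_zero]
  have hX : ∀ n, Polynomial.X * P n = P (n + 1) + Polynomial.C (lam * ((n : ℝ) + 1)) * P n +
      Polynomial.C ((n : ℝ) * ((n : ℝ) + 1)) * P (n - 1) := by
    intro n
    apply Polynomial.funext
    intro s
    simpa using hrec n s
  have hXS : ∀ n m, S (Polynomial.X * P n * P m) = S (P (n + 1) * P m) +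
      lam * ((n : ℝ) + 1) * S (P n * P m) + (n : ℝ) * ((n : ℝ) + 1) * S (P (n - 1) * P m) := by
    intro n m
    rw [hX, add_mul, add_mul, Sadd, Sadd, mul_assoc, mul_assoc, Smul, Smul]
  have hstep : ∀ n m, S (P n * P (m + 1)) = S (P (n + 1) * P m) +
      lam * ((n : ℝ) - m) * S (P n * P m) + (n : ℝ) * ((n : ℝ) + 1) * S (P (n - 1) * P m)
      - (m : ℝ) * ((m : ℝ) + 1) * S (P n * P (m - 1)) := by
    intro n m
    have h1 := hXS n m
    have h2 := hXS m n
    rw [show Polynomial.X * P m * P n = Polynomial.X * P n * P m by ring, h1,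
      mul_comm (P (m + 1)), mul_comm (P m), mul_comm (P (m - 1))] at h2
    linarith
  have main : ∀ m n, S (P n * P m) =
      if n = m then (Nat.factorial n : ℝ) * (Nat.factorial (n + 1)) else 0 := by
    intro m
    induction m using Nat.strong_induction_on with
    | _ m ih =>
    intro n
    rcases m with _ | m
    · rw [h0, mul_one]
      rcases n with _ | n
      · simp [S1]
      · simp [Sz]
    · rw [hstep, ih m (by omega), ih m (by omega), ih m (by omega), ih (m - 1) (by omega)]
      rcases lt_trichotomy n m with h | h | h
      · by_cases h' : n + 1 = m
        · subst h'
          rw [if_pos rfl, if_neg (by omega), if_neg (by omega), if_pos (by omega),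
            if_neg (by omega)]
          simp [Nat.factorial_succ]
          ring
        · rw [if_neg h', if_neg (by omega), if_neg (by omega), if_neg (by omega),
            if_neg (by omega)]; ring
      · subst h
        rcases n with _ | n
        · simp
        · simp
      · by_cases h' : n = m + 1
        · subst h'
          rw [if_neg (by omega), if_neg (by omega), if_pos (by omega), if_neg (by omega),
            if_pos rfl]
          simp [Nat.factorial_succ]
          ring
        · rw [if_neg (by omega), if_neg (by omega), if_neg (by omega), if_neg (by omega),
            if_neg (by omega)]; ring
  constructor
  · intro n m hnm
    have := main m n
    rw [if_neg hnm, hS, hq2] at this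
    rw [← this]
    congr 2; ext k; simp only [Polynomial.eval_mul]; ring
  · intro n
    have := main n n
    rw [if_pos rfl, hS, hq2] at this
    rw [← this]
    congr 2; ext k; simp only [Polynomial.eval_mul]; ring
end

section
/- For every t ∈ ℝ, the integral ∫_0^∞ (e^{its} − 1) s^{−1} e^{−s} ds converges and equals −Log(1 − it), where Log denotes the principal branch of the complex logarithm. -/
open MeasureTheory

noncomputable def gpF (t s : ℝ) : ℂ :=
  (Complex.exp (Complex.I * t * s) - 1) * ((Real.exp (-s) / s : ℝ) : ℂ)

lemma gpF_meas (t : ℝ) : AEStronglyMeasurable (gpF t) (volume.restrict (Set.Ioi 0)) := by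
  apply Measurable.aestronglyMeasurable
  unfold gpF
  fun_prop

lemma gp_exp_int : IntegrableOn (fun s : ℝ => Real.exp (-s)) (Set.Ioi 0) volume := by
  simpa using integrableOn_exp_mul_Ioi (a := -1) (by norm_num) 0

lemma gpF_int (t : ℝ) : IntegrableOn (gpF t) (Set.Ioi 0) volume := by
  refine Integrable.mono' (gp_exp_int.const_mul |t|) (gpF_meas t) ?_
  refine (ae_restrict_mem measurableSet_Ioi).mono fun s hs => ?_
  have hs : 0 < s := hs
  have h := Real.norm_exp_I_mul_ofReal_sub_one_le (x := t * s)
  rw [Real.norm_eq_abs, abs_mul, abs_of_pos hs] at h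
  push_cast at h
  rw [← mul_assoc] at h
  unfold gpF
  rw [norm_mul, Complex.norm_real, Real.norm_of_nonneg (by positivity)]
  calc _ ≤ |t| * s * (Real.exp (-s) / s) := by gcongr
    _ = _ := by field_simp

lemma gpF_deriv (t : ℝ) :
    HasDerivAt (fun t => ∫ s in Set.Ioi (0 : ℝ), gpF t s) (Complex.I / (1 - Complex.I * t)) t := by
  have key := hasDerivAt_integral_of_dominated_loc_of_deriv_le (F := gpF) (x₀ := t)
    (μ := volume.restrict (Set.Ioi 0)) (s := Set.univ) (bound := fun s => Real.exp (-s))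
    (F' := fun t s => Complex.I * Complex.exp ((Complex.I * t - 1) * s)) Filter.univ_mem
    (Filter.Eventually.of_forall gpF_meas) (gpF_int t)
    (by apply Measurable.aestronglyMeasurable; fun_prop)
    (by
      refine Filter.Eventually.of_forall fun s x _ => ?_
      simp [Complex.norm_exp])
    gp_exp_int
    (by
      refine (ae_restrict_mem measurableSet_Ioi).mono fun s hs x _ => ?_
      have hs : (s : ℂ) ≠ 0 := by exact_mod_cast (ne_of_gt hs : s ≠ 0)
      have h1 : HasDerivAt (fun x : ℝ => Complex.I * (x : ℂ) * s) (Complex.I * 1 * s) x :=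
        ((Complex.ofRealCLM.hasDerivAt (x := x)).const_mul Complex.I).mul_const _
      have h2 := (h1.cexp.sub_const 1).mul_const ((Real.exp (-s) / s : ℝ) : ℂ)
      unfold gpF
      refine HasDerivAt.congr_deriv h2 ?_
      rw [show (Complex.I * (x : ℂ) - 1) * s = Complex.I * x * s + -s by ring, Complex.exp_add]
      push_cast
      field_simp)
  have h := key.2
  rw [integral_const_mul, integral_exp_mul_complex_Ioi (by simp)] at h
  refine HasDerivAt.congr_deriv h ?_
  have : (1 - Complex.I * t) ≠ 0 := fun h => by simpa using congrArg Complex.re h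
  have h3 : (Complex.I * t - 1) ≠ 0 := fun h => by simpa using congrArg Complex.re h
  simp
  field_simp
  ring

lemma gp_eq (t : ℝ) :
    ∫ s in Set.Ioi (0 : ℝ), gpF t s = -Complex.log (1 - Complex.I * t) := by
  have d : ∀ t : ℝ, HasDerivAt (fun t : ℝ => (∫ s in Set.Ioi (0 : ℝ), gpF t s)
      + Complex.log (1 - Complex.I * t)) 0 t := fun t => by
    have h1 : HasDerivAt (fun x : ℝ => 1 - Complex.I * (x : ℂ)) (-(Complex.I * 1)) t :=
      ((Complex.ofRealCLM.hasDerivAt (x := t)).const_mul Complex.I).const_sub 1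
    have h2 := h1.clog_real (by simp [Complex.mem_slitPlane_iff])
    refine HasDerivAt.congr_deriv ((gpF_deriv t).add h2) ?_
    ring
  have h := is_const_of_deriv_eq_zero (fun x => (d x).differentiableAt) (fun x => (d x).deriv) t 0
  simp only [gpF, Complex.ofReal_zero, mul_zero, zero_mul, Complex.exp_zero, sub_self, sub_zero,
    Complex.log_one, integral_zero, add_zero] at h
  exact eq_neg_of_add_eq_zero_left h

/-- The Lévy–Khintchine exponent of the gamma process: for every `t ∈ ℝ`, the integral
`∫_0^∞ (e^{its} - 1) s⁻¹ e^{-s} ds` converges (absolutely) and equals `-Log(1 - it)`,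
where `Log` is the principal branch of the complex logarithm. -/
theorem gamma_process_levy_khintchine_exponent (t : ℝ) :
    IntegrableOn
      (fun s : ℝ => (Complex.exp (Complex.I * t * s) - 1) * ((Real.exp (-s) / s : ℝ) : ℂ))
      (Set.Ioi 0) volume ∧
    (∫ s in Set.Ioi (0 : ℝ),
        (Complex.exp (Complex.I * t * s) - 1) * ((Real.exp (-s) / s : ℝ) : ℂ))
      = -Complex.log (1 - Complex.I * t) := by
  exact ⟨gpF_int t, gp_eq t⟩
end
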